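/- arXiv:2507.10166 — 3 statements merged into one kernel-verified Lean document; each statement's English description precedes it below -/
import Mathlib

section
/- Let A ∈ ℝ^{n×n}, B ∈ ℝ^{n×m}, K ∈ ℝ^{m×n}, g : ℝⁿ → ℝⁿ, and let E^P, W^P, X ⊆ ℝⁿ and V ⊆ ℝᵐ be sets. Let z^P, x^P : ℕ → ℝⁿ and v^P : ℕ → ℝᵐ satisfy the Parent nominal dynamics z^P_{i+1} = A z^P_i + B v^P_i, the Parent actual dynamics x^P_{i+1} = A x^P_i + B u^P_i + g(x^P_i) with the ancillary law u^P_i = v^P_i + K(x^P_i − z^P_i), and the input constraint v^P_i ∈ V ⊖ (K '' E^P). Assume: (i) E^P is robustly positively invariant for the error dynamics, i.e. for all e ∈ E^P and w ∈ W^P, (A + B K) e + w ∈ E^P; (ii) x^P_i ∈ X for all i and g maps X into W^P; (iii) x^P_0 − z^P_0 ∈ E^P. Then the warm start z^C_i := x^P_i, v^C_i := u^P_i satisfies, for every i: (a) z^C_{i+1} = A z^C_i + g(z^C_i) + B v^C_i (the Child nominal dynamics constraint); (b) z^C_i ∈ {z^P_i} ⊕ E^P (the stage-wise tube constraint); and (c)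 v^C_i ∈ V (the input admissibility constraint). (Theorem 2: feasibility of the P-MPC-based warm start for nominal C-MPC.) -/
open Matrix Pointwise

/-- The Pontryagin (erosion) difference of sets: `A ⊖ B = {x : ∀ b ∈ B, x + b ∈ A}`. -/
def pontryaginDiff {α : Type*} [Add α] (A B : Set α) : Set α :=
  {x | ∀ b ∈ B, x + b ∈ A}

/-!
With an arbitrary feedback `κ` in place of `K`, the tracking error `e = x - z` obeys
`e⁺ = A e + B (κ e) + g x`, in which the nominal input has cancelled. The states thus enter the
error dynamics only through the disturbance `g x ∈ W`, and robust invariance of `S` keeps `e` in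
`S` forever. That is the tube constraint, and erosion of the input set by `κ '' S` is exactly the
margin that the correction `κ e` needs.
-/

/-- Robust positive invariance: `S` is preserved by the dynamics `e⁺ = f e + w`, whatever the
disturbance `w ∈ W`. -/
def IsRobustlyInvariant {E : Type*} [Add E] (f : E → E) (W S : Set E) : Prop :=
  ∀ e ∈ S, ∀ w ∈ W, f e + w ∈ S

theorem IsRobustlyInvariant.mem_of_succ_eq {E : Type*} [Add E] {f : E → E} {W S : Set E}
    (hS : IsRobustlyInvariant f W S) {e w : ℕ → E} (he : ∀ i, e (i + 1) = f (e i) + w i)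
    (hw : ∀ i, w i ∈ W) (h0 : e 0 ∈ S) (i : ℕ) : e i ∈ S := by
  induction i with
  | zero => exact h0
  | succ i ih => exact he i ▸ hS (e i) ih (w i) (hw i)

theorem mem_pontryaginDiff_image {α β : Type*} [Add α] {V : Set α} {f : β → α} {S : Set β}
    {v : α} : v ∈ pontryaginDiff V (f '' S) ↔ ∀ e ∈ S, v + f e ∈ V :=
  Set.forall_mem_image

theorem mem_singleton_add_iff_sub_mem {E : Type*} [AddCommGroup E] {x z : E} {S : Set E} :
    x ∈ {z} + S ↔ x - z ∈ S := by
  rw [Set.singleton_add, Set.image_add_left, Set.mem_preimage, neg_add_eq_sub]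

section Tube

variable {E U : Type*} [AddCommGroup E] [AddZeroClass U] (A : E →+ E) (B : U →+ E)

theorem actual_sub_nominal_eq (x z d : E) (v k : U) :
    A x + B (v + k) + d - (A z + B v) = A (x - z) + B k + d := by
  rw [map_add, map_sub]
  abel

theorem sub_nominal_mem_of_isRobustlyInvariant {κ : E → U} {W S : Set E} {x z d : ℕ → E}
    {v : ℕ → U} (hz : ∀ i, z (i + 1) = A (z i) + B (v i))
    (hx : ∀ i, x (i + 1) = A (x i) + B (v i + κ (x i - z i)) + d i)
    (hS : IsRobustlyInvariant (fun e ↦ A e + B (κ e)) W S)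
    (hd : ∀ i, d i ∈ W) (h0 : x 0 - z 0 ∈ S) (i : ℕ) : x i - z i ∈ S := by
  refine hS.mem_of_succ_eq (e := fun i ↦ x i - z i) (fun i ↦ ?_) hd h0 i
  rw [hx, hz, actual_sub_nominal_eq]

theorem stmt_1_general {κ : E → U} {g : E → E} {W S : Set E} {V : Set U} {x z : ℕ → E}
    {u v : ℕ → U} (hz : ∀ i, z (i + 1) = A (z i) + B (v i))
    (hu : ∀ i, u i = v i + κ (x i - z i))
    (hx : ∀ i, x (i + 1) = A (x i) + B (u i) + g (x i))
    (hv : ∀ i, v i ∈ pontryaginDiff V (κ '' S))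
    (hS : IsRobustlyInvariant (fun e ↦ A e + B (κ e)) W S)
    (hg : ∀ i, g (x i) ∈ W) (h0 : x 0 - z 0 ∈ S) (i : ℕ) :
    x (i + 1) = A (x i) + g (x i) + B (u i) ∧ x i ∈ {z i} + S ∧ u i ∈ V := by
  have error_mem : x i - z i ∈ S :=
    sub_nominal_mem_of_isRobustlyInvariant A B hz (fun i ↦ hu i ▸ hx i) hS hg h0 i
  refine ⟨?child_dynamics, mem_singleton_add_iff_sub_mem.mpr error_mem, ?input_mem⟩
  case child_dynamics => rw [hx, add_right_comm]
  case input_mem => exact hu i ▸ mem_pontryaginDiff_image.mp (hv i) _ error_mem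

end Tube

theorem isRobustlyInvariant_mulVec_add_mulVec_iff {R n m : Type*} [NonUnitalSemiring R]
    [Fintype n] [Fintype m] {A : Matrix n n R} {B : Matrix n m R} {K : Matrix m n R}
    {W S : Set (n → R)} :
    IsRobustlyInvariant (fun e ↦ A *ᵥ e + B *ᵥ (K *ᵥ e)) W S ↔
      IsRobustlyInvariant ((A + B * K) *ᵥ ·) W S := by
  simp only [add_mulVec, mulVec_mulVec]

/-- **Theorem 2 (Feasibility of the P-MPC-based warm start for nominal C-MPC).**
Under the Parent nominal dynamics, the Parent actual dynamics with ancillary law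
`uP i = vP i + K (xP i - zP i)`, the tightened input constraint
`vP i ∈ V ⊖ (K '' EP)`, robust positive invariance of `EP` for the error dynamics,
`xP i ∈ X` with `g '' X ⊆ WP`, and `xP 0 - zP 0 ∈ EP`, the warm start
`zC := xP`, `vC := uP` satisfies the Child nominal dynamics, the stage-wise tube
constraint `zC i ∈ {zP i} ⊕ EP`, and the input admissibility `vC i ∈ V`. -/
theorem stmt_1 {n m : ℕ}
    (A : Matrix (Fin n) (Fin n) ℝ) (B : Matrix (Fin n) (Fin m) ℝ)
    (K : Matrix (Fin m) (Fin n) ℝ) (g : (Fin n → ℝ) → (Fin n → ℝ))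
    (EP WP X : Set (Fin n → ℝ)) (V : Set (Fin m → ℝ))
    (zP xP : ℕ → Fin n → ℝ) (vP uP : ℕ → Fin m → ℝ)
    (hnom : ∀ i, zP (i + 1) = A.mulVec (zP i) + B.mulVec (vP i))
    (hanc : ∀ i, uP i = vP i + K.mulVec (xP i - zP i))
    (hact : ∀ i, xP (i + 1) = A.mulVec (xP i) + B.mulVec (uP i) + g (xP i))
    (hinput : ∀ i, vP i ∈ pontryaginDiff V (K.mulVec '' EP))
    (hRPI : ∀ e ∈ EP, ∀ w ∈ WP, (A + B * K).mulVec e + w ∈ EP)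
    (hX : ∀ i, xP i ∈ X) (hg : ∀ x ∈ X, g x ∈ WP)
    (h0 : xP 0 - zP 0 ∈ EP) :
    ∀ i,
      (xP (i + 1) = A.mulVec (xP i) + g (xP i) + B.mulVec (uP i)) ∧
      (xP i ∈ ({zP i} : Set (Fin n → ℝ)) + EP) ∧
      (uP i ∈ V) := by
  exact stmt_1_general A.mulVecLin.toAddMonoidHom B.mulVecLin.toAddMonoidHom hnom hanc hact hinput
    (isRobustlyInvariant_mulVec_add_mulVec_iff.mpr hRPI) (fun i ↦ hg _ (hX i)) h0
end

section
/- Consider the disturbed nonlinear system x_{k+1} = A x_k + g(x_k) + B u_k + w_k and its nominal model z_{k+1} = A z_k + g(z_k) + B v_k, controlled by the ancillary law u_k = v_k + K(x_k − z_k), where A ∈ ℝ^{n×n}, B ∈ ℝ^{n×m}, K ∈ ℝ^{m×n}, g : ℝⁿ → ℝⁿ is Lipschitz with constant L ≥ 0, and ‖w_k‖ ≤ w̄ for all k. Let ρ := ‖A + B K‖ + L (operator norm) and assume ρ < 1, and set r := w̄ / (1 − ρ). If ‖x_0 − z_0‖ ≤ r, then ‖x_k − z_k‖ ≤ r for every k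 ∈ ℕ; that is, the closed ball of radius r around the nominal trajectory is a robust positive invariant tube. -/
/-!
One step of the true system and one step of the nominal model apply the same closed-loop map, to
`x_k` and to `z_k` respectively, and differ further only by `w_k`. Up to a constant, this map is
`x ↦ (A + B K) x + g x`, so it is `ρ`-Lipschitz and `e_k = ‖x_k - z_k‖` obeys
`e_{k+1} ≤ w̄ + ρ e_k`. The radius `r` is the fixed point of `s ↦ w̄ + ρ s`.
-/

open scoped NNReal

theorem dist_le_of_perturbed_orbit {X : Type*} [PseudoMetricSpace X] {f : ℕ → X → X} {ρ : ℝ≥0}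
    {x z : ℕ → X} {c r : ℝ} (hf : ∀ k, LipschitzWith ρ (f k))
    (hx : ∀ k, dist (x (k + 1)) (f k (x k)) ≤ c) (hz : ∀ k, z (k + 1) = f k (z k))
    (hr : c + ρ * r ≤ r) (h0 : dist (x 0) (z 0) ≤ r) (k : ℕ) :
    dist (x k) (z k) ≤ r := by
  induction k with
  | zero => exact h0
  | succ k ih =>
    calc dist (x (k + 1)) (z (k + 1))
        ≤ dist (x (k + 1)) (f k (x k)) + dist (f k (x k)) (f k (z k)) := by
          rw [hz]
          exact dist_triangle _ _ _
      _ ≤ c + ρ * r := add_le_add (hx k) ((hf k).dist_le_mul_of_le ih)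
      _ ≤ r := hr

section ClosedLoop

variable {𝕜 E F : Type*} [NontriviallyNormedField 𝕜]
  [SeminormedAddCommGroup E] [NormedSpace 𝕜 E] [SeminormedAddCommGroup F] [NormedSpace 𝕜 F]
  (A : E →L[𝕜] E) (B : F →L[𝕜] E) (K : E →L[𝕜] F)

/-- The disturbance-free successor of the state `x` under the ancillary law
`u = v + K (x - z)`, as a function of `x` for fixed nominal state `z` and nominal input `v`.
At `x = z` it is the nominal model, so it drives both trajectories. -/
def ancillaryClosedLoop (g : E → E) (z : E) (v : F) (x : E) : E :=
  A x + g x + B (v + K (x - z))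

theorem ancillaryClosedLoop_self (g : E → E) (z : E) (v : F) :
    ancillaryClosedLoop A B K g z v z = A z + g z + B v := by
  simp [ancillaryClosedLoop]

theorem ancillaryClosedLoop_eq (g : E → E) (z : E) (v : F) (x : E) :
    ancillaryClosedLoop A B K g z v x = (A + B.comp K) x + g x + B (v - K z) := by
  simp only [ancillaryClosedLoop, map_add, map_sub, add_apply, ContinuousLinearMap.comp_apply]
  abel

theorem lipschitzWith_ancillaryClosedLoop {g : E → E} {L : ℝ≥0} (hg : LipschitzWith L g)
    (z : E) (v : F) :
    LipschitzWith (‖A + B.comp K‖₊ + L) (ancillaryClosedLoop A B K g z v) := by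
  rw [funext (ancillaryClosedLoop_eq A B K g z v)]
  simpa only [add_zero] using
    ((A + B.comp K).lipschitz.add hg).add (LipschitzWith.const (B (v - K z)))

theorem stmt_3_general {g : E → E} {L : ℝ≥0} (hg : LipschitzWith L g)
    {x z : ℕ → E} {v : ℕ → F} {w : ℕ → E} {wbar : ℝ} (hw : ∀ k, ‖w k‖ ≤ wbar)
    (hx : ∀ k, x (k + 1) = A (x k) + g (x k) + B (v k + K (x k - z k)) + w k)
    (hz : ∀ k, z (k + 1) = A (z k) + g (z k) + B (v k))
    {ρ r : ℝ} (hρdef : ρ = ‖A + B.comp K‖ + L) (hρ : ρ < 1) (hr : r = wbar / (1 - ρ))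
    (h0 : ‖x 0 - z 0‖ ≤ r) (k : ℕ) :
    ‖x k - z k‖ ≤ r := by
  have radius_fixed : wbar + ρ * r = r := by
    have := (eq_div_iff (sub_pos.2 hρ).ne').1 hr
    linarith
  simp only [← dist_eq_norm] at h0 ⊢
  refine dist_le_of_perturbed_orbit
    (fun k ↦ lipschitzWith_ancillaryClosedLoop A B K hg (z k) (v k)) (c := wbar)
    (fun k ↦ ?_) (fun k ↦ ?_) ?_ h0 k
  · simpa [hx, ancillaryClosedLoop, dist_eq_norm] using hw k
  · rw [hz, ancillaryClosedLoop_self]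
  · simpa [← hρdef] using radius_fixed.le

end ClosedLoop

/-- For the disturbed nonlinear system `x_{k+1} = A x_k + g(x_k) + B u_k + w_k` with
nominal model `z_{k+1} = A z_k + g(z_k) + B v_k` and ancillary law
`u_k = v_k + K (x_k - z_k)`, where `g` is `L`-Lipschitz and `‖w_k‖ ≤ w̄`, if
`ρ = ‖A + B K‖ + L < 1` and `r = w̄ / (1 - ρ)`, then `‖x_0 - z_0‖ ≤ r` implies
`‖x_k - z_k‖ ≤ r` for all `k`: the closed ball of radius `r` around the nominal
trajectory is a robust positive invariant tube. -/
theorem stmt_3 {n m : ℕ}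
    (A : EuclideanSpace ℝ (Fin n) →L[ℝ] EuclideanSpace ℝ (Fin n))
    (B : EuclideanSpace ℝ (Fin m) →L[ℝ] EuclideanSpace ℝ (Fin n))
    (K : EuclideanSpace ℝ (Fin n) →L[ℝ] EuclideanSpace ℝ (Fin m))
    (g : EuclideanSpace ℝ (Fin n) → EuclideanSpace ℝ (Fin n))
    (L : ℝ) (hL : 0 ≤ L)
    (hLip : ∀ x₁ x₂, ‖g x₁ - g x₂‖ ≤ L * ‖x₁ - x₂‖)
    (x z : ℕ → EuclideanSpace ℝ (Fin n))
    (v : ℕ → EuclideanSpace ℝ (Fin m))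
    (w : ℕ → EuclideanSpace ℝ (Fin n))
    (wbar : ℝ) (hw : ∀ k, ‖w k‖ ≤ wbar)
    (hx : ∀ k, x (k + 1) = A (x k) + g (x k) + B (v k + K (x k - z k)) + w k)
    (hz : ∀ k, z (k + 1) = A (z k) + g (z k) + B (v k))
    (ρ r : ℝ) (hρdef : ρ = ‖A + B.comp K‖ + L) (hρ : ρ < 1)
    (hr : r = wbar / (1 - ρ))
    (h0 : ‖x 0 - z 0‖ ≤ r) :
    ∀ k, ‖x k - z k‖ ≤ r := by
  lift L to ℝ≥0 using hL
  exact stmt_3_general A B K (lipschitzWith_iff_norm_sub_le.2 hLip) hw hx hz hρdef hρ hr h0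
end

section
/- Consider the disturbed nonlinear system x_{k+1} = A x_k + g(x_k) + B u_k + w_k and its nominal model z_{k+1} = A z_k + g(z_k) + B v_k, controlled by the ancillary law u_k = v_k + K(x_k − z_k), where g : ℝⁿ → ℝⁿ is Lipschitz with constant L ≥ 0 and ‖w_k‖ ≤ w̄ for all k. Let ρ := ‖A + B K‖ + L (operator norm) and assume ρ < 1. Then for every k ∈ ℕ, ‖x_k − z_k‖ ≤ ρ^k ‖x_0 − z_0‖ + w̄ / (1 − ρ); in particular the tracking error converges exponentially to the ball of radius w̄/(1−ρ). -/
/-!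
Seen as a function of the actual state alone, the closed loop along the nominal trajectory has
linear part `A + B K`, because the feedback enters through `x`; so it is Lipschitz with constant
`ρ = ‖A + B K‖ + L`. The nominal trajectory is an exact orbit of these time-varying maps, and the
actual trajectory an orbit up to an error `w̄` in each step. The distance `e` between the two then
satisfies `e (k + 1) ≤ ρ * e k + w̄`, and its excess over the fixed point `w̄ / (1 - ρ)` of this
recursion shrinks by the factor `ρ` at each step.
-/

open scoped NNReal

theorem sub_div_le_pow_mul_of_le_mul_add {u : ℕ → ℝ} {ρ c : ℝ} (hρ₀ : 0 ≤ ρ) (hρ : ρ ≠ 1)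
    (hu : ∀ k, u (k + 1) ≤ ρ * u k + c) (k : ℕ) :
    u k - c / (1 - ρ) ≤ ρ ^ k * (u 0 - c / (1 - ρ)) := by
  have fixed_point : ρ * (c / (1 - ρ)) + c = c / (1 - ρ) := by
    have : 1 - ρ ≠ 0 := sub_ne_zero.mpr hρ.symm
    field_simp
    ring
  exact le_geom (u := fun j ↦ u j - c / (1 - ρ)) hρ₀ k fun j _ ↦ by linarith [hu j]

theorem dist_le_pow_mul_dist_add_div_of_lipschitzWith {X : Type*} [PseudoMetricSpace X]
    {F : ℕ → X → X} {ρ : ℝ≥0} (hF : ∀ k, LipschitzWith ρ (F k)) (hρ : ρ < 1)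
    {x z : ℕ → X} {ε : ℝ} (hx : ∀ k, dist (x (k + 1)) (F k (x k)) ≤ ε)
    (hz : ∀ k, z (k + 1) = F k (z k)) (k : ℕ) :
    dist (x k) (z k) ≤ ρ ^ k * dist (x 0) (z 0) + ε / (1 - ρ) := by
  have hρ' : (ρ : ℝ) < 1 := hρ
  have one_step (j : ℕ) : dist (x (j + 1)) (z (j + 1)) ≤ ρ * dist (x j) (z j) + ε :=
    calc dist (x (j + 1)) (z (j + 1))
      _ ≤ dist (x (j + 1)) (F j (x j)) + dist (F j (x j)) (F j (z j)) := by
        rw [hz j]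
        exact dist_triangle _ _ _
      _ ≤ ε + ρ * dist (x j) (z j) := add_le_add (hx j) ((hF j).dist_le_mul _ _)
      _ = ρ * dist (x j) (z j) + ε := add_comm _ _
  have radius_nonneg : 0 ≤ ε / (1 - ρ) :=
    div_nonneg (dist_nonneg.trans (hx 0)) (sub_nonneg.mpr hρ'.le)
  have excess_le := sub_div_le_pow_mul_of_le_mul_add (u := fun j ↦ dist (x j) (z j))
    ρ.coe_nonneg hρ'.ne one_step k
  rw [mul_sub] at excess_le
  linarith [mul_nonneg (pow_nonneg ρ.coe_nonneg k) radius_nonneg]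

section TubeMPC

variable {𝕜 E U : Type*} [NontriviallyNormedField 𝕜] [SeminormedAddCommGroup E] [NormedSpace 𝕜 E]
  [AddCommGroup U] [Module 𝕜 U] [TopologicalSpace U]
  (A : E →L[𝕜] E) (B : U →L[𝕜] E) (K : E →L[𝕜] U) (g : E → E)

/-- The disturbance-free one-step map `x ↦ A x + g x + B u` under the ancillary law
`u = v + K (x - z)`, with the nominal state `z` and the nominal input `v` as parameters. -/
def closedLoop (z : E) (v : U) (x : E) : E :=
  A x + g x + B (v + K (x - z))

theorem closedLoop_self (z : E) (v : U) : closedLoop A B K g z v z = A z + g z + B v := by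
  simp [closedLoop]

theorem closedLoop_eq_add_comp (z : E) (v : U) (x : E) :
    closedLoop A B K g z v x = (A + B.comp K) x + g x + (B v - B (K z)) := by
  simp only [closedLoop, add_apply, ContinuousLinearMap.comp_apply, map_add, map_sub]
  abel

variable {g}

theorem lipschitzWith_closedLoop {L : ℝ≥0} (hg : LipschitzWith L g) (z : E) (v : U) :
    LipschitzWith (‖A + B.comp K‖₊ + L) (closedLoop A B K g z v) := by
  rw [funext (closedLoop_eq_add_comp A B K g z v)]
  simpa only [add_zero] using
    ((A + B.comp K).lipschitz.add hg).add (LipschitzWith.const (B v - B (K z)))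

variable {A B K}

theorem stmt_4_general {L : ℝ≥0} (hg : LipschitzWith L g) (hρ : ‖A + B.comp K‖ + L < 1)
    {x z : ℕ → E} {v : ℕ → U} {w : ℕ → E} {wbar : ℝ} (hw : ∀ k, ‖w k‖ ≤ wbar)
    (hx : ∀ k, x (k + 1) = A (x k) + g (x k) + B (v k + K (x k - z k)) + w k)
    (hz : ∀ k, z (k + 1) = A (z k) + g (z k) + B (v k)) (k : ℕ) :
    ‖x k - z k‖ ≤
      (‖A + B.comp K‖ + L) ^ k * ‖x 0 - z 0‖ + wbar / (1 - (‖A + B.comp K‖ + L)) := by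
  have perturbed (j : ℕ) : dist (x (j + 1)) (closedLoop A B K g (z j) (v j) (x j)) ≤ wbar := by
    simpa [hx j, closedLoop, dist_eq_norm] using hw j
  have nominal (j : ℕ) : z (j + 1) = closedLoop A B K g (z j) (v j) (z j) := by
    rw [hz j, closedLoop_self]
  simpa only [dist_eq_norm, NNReal.coe_add, coe_nnnorm] using
    dist_le_pow_mul_dist_add_div_of_lipschitzWith
      (fun j ↦ lipschitzWith_closedLoop A B K hg (z j) (v j)) (mod_cast hρ) perturbed nominal k

end TubeMPC

/-- For the disturbed nonlinear system `x_{k+1} = A x_k + g(x_k) + B u_k + w_k` with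
nominal model `z_{k+1} = A z_k + g(z_k) + B v_k` and ancillary law
`u_k = v_k + K (x_k - z_k)`, where `g` is `L`-Lipschitz and `‖w_k‖ ≤ w̄`, if
`ρ = ‖A + B K‖ + L < 1`, then `‖x_k - z_k‖ ≤ ρ^k ‖x_0 - z_0‖ + w̄ / (1 - ρ)` for all
`k`: the tracking error converges exponentially to the ball of radius `w̄ / (1 - ρ)`. -/
theorem stmt_4 {n m : ℕ}
    (A : EuclideanSpace ℝ (Fin n) →L[ℝ] EuclideanSpace ℝ (Fin n))
    (B : EuclideanSpace ℝ (Fin m) →L[ℝ] EuclideanSpace ℝ (Fin n))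
    (K : EuclideanSpace ℝ (Fin n) →L[ℝ] EuclideanSpace ℝ (Fin m))
    (g : EuclideanSpace ℝ (Fin n) → EuclideanSpace ℝ (Fin n))
    (L : ℝ) (hL : 0 ≤ L)
    (hLip : ∀ x₁ x₂, ‖g x₁ - g x₂‖ ≤ L * ‖x₁ - x₂‖)
    (x z : ℕ → EuclideanSpace ℝ (Fin n))
    (v : ℕ → EuclideanSpace ℝ (Fin m))
    (w : ℕ → EuclideanSpace ℝ (Fin n))
    (wbar : ℝ) (hw : ∀ k, ‖w k‖ ≤ wbar)
    (hx : ∀ k, x (k + 1) = A (x k) + g (x k) + B (v k + K (x k - z k)) + w k)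
    (hz : ∀ k, z (k + 1) = A (z k) + g (z k) + B (v k))
    (ρ : ℝ) (hρdef : ρ = ‖A + B.comp K‖ + L) (hρ : ρ < 1) :
    ∀ k, ‖x k - z k‖ ≤ ρ ^ k * ‖x 0 - z 0‖ + wbar / (1 - ρ) := by
  lift L to ℝ≥0 using hL
  subst hρdef
  exact stmt_4_general (lipschitzWith_iff_norm_sub_le.mpr hLip) hρ hw hx hz
end
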